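/- Let C₁,…,C₇ be seven pairwise disjoint maximal commuting Pauli classes in dimension d = 8. Then there is no choice of operators σ₁ ∈ C₁, …, σ₇ ∈ C₇ such that σ₁,…,σ₇ pairwise commute; in particular, no maximal commuting Pauli class can be formed by taking exactly one member (up to phase) from each of the seven classes. -/

import Mathlib

open Matrix

noncomputable section

/-- Matrices on the Hilbert space of `n` qubits, with rows and columns indexed by
bit strings `Fin n → Fin 2`. -/
abbrev QMat (n : ℕ) := Matrix (Fin n → Fin 2) (Fin n → Fin 2) ℂ

/-- The single-qubit identity. -/
def pI : Matrix (Fin 2) (Fin 2) ℂ := 1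

/-- The single-qubit Pauli X. -/
def pX : Matrix (Fin 2) (Fin 2) ℂ := !![0, 1; 1, 0]

/-- The single-qubit Pauli Y. -/
def pY : Matrix (Fin 2) (Fin 2) ℂ := !![0, -Complex.I; Complex.I, 0]

/-- The single-qubit Pauli Z. -/
def pZ : Matrix (Fin 2) (Fin 2) ℂ := !![1, 0; 0, -1]

/-- The `n`-fold Kronecker product `W 0 ⊗ ⋯ ⊗ W (n-1)`, realized on indices
`Fin n → Fin 2`. -/
def kron (n : ℕ) (W : Fin n → Matrix (Fin 2) (Fin 2) ℂ) : QMat n :=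
  fun v w => ∏ j, W j (v j) (w j)

/-- `M` is an `n`-qubit Pauli operator: an `n`-fold Kronecker product of matrices
from `{I₂, X, Y, Z}`. -/
def IsPauliOp (n : ℕ) (M : QMat n) : Prop :=
  ∃ W : Fin n → Matrix (Fin 2) (Fin 2) ℂ,
    (∀ j, W j = pI ∨ W j = pX ∨ W j = pY ∨ W j = pZ) ∧ M = kron n W

/-- Two matrices are equal up to phase if one is a nonzero scalar multiple of the other. -/
def PhaseEq {m : Type*} (A B : Matrix m m ℂ) : Prop := ∃ c : ℂ, c ≠ 0 ∧ A = c • B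

/-- A maximal commuting Pauli class in dimension `d = 2 ^ n`: a set of `d - 1`
pairwise commuting non-identity `n`-qubit Pauli operators, pairwise distinct up to phase. -/
def IsMaxClass (n : ℕ) (C : Set (QMat n)) : Prop :=
  C.Finite ∧ C.ncard = 2 ^ n - 1 ∧
  (∀ U ∈ C, IsPauliOp n U ∧ U ≠ 1) ∧
  (∀ U ∈ C, ∀ V ∈ C, U * V = V * U) ∧
  (∀ U ∈ C, ∀ V ∈ C, U ≠ V → ¬ PhaseEq U V)

/-- Two classes are disjoint if no member of one is equal up to phase to a member of the other. -/
def ClassDisjoint {n : ℕ} (C D : Set (QMat n)) : Prop :=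
  ∀ U ∈ C, ∀ V ∈ D, ¬ PhaseEq U V

/-- Two classes are equal up to phase (as sets of operators). -/
def ClassPhaseEq {n : ℕ} (C D : Set (QMat n)) : Prop :=
  (∀ U ∈ C, ∃ V ∈ D, PhaseEq U V) ∧ (∀ V ∈ D, ∃ U ∈ C, PhaseEq U V)

/-- The standard Hermitian inner product on `ι → ℂ` (conjugate-linear in the first slot). -/
def cinner {ι : Type*} [Fintype ι] (x y : ι → ℂ) : ℂ :=
  ∑ k, (starRingEnd ℂ) (x k) * y k

/-!
Up to phase, the `n`-qubit Pauli operators form the `𝔽₂`-vector space of pairs of bit strings, and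
commutation is orthogonality for a symplectic form. A maximal commuting class together with the
identity is a Lagrangian subspace `Lᵢ`, and disjoint classes have trivially intersecting `Lᵢ`.

For `n = 3`, six commuting representatives `sᵢ ∈ Lᵢ` span a Lagrangian `S` containing at most one
further nonzero vector, so `Lᵢ ∩ S = {0, sᵢ}` and `S` contains a plane `P = {0, sᵢ, sⱼ, sₖ}`. Each
of `Lᵢ`, `Lⱼ`, `Lₖ` has a vector in `P^⊥` outside `S`. As `S` has index two in `P^⊥` and `P` has
index two in `S`, two of these three vectors, say from `Lᵢ` and `Lⱼ`, differ by an element of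
`P = (Lᵢ ∩ S) + (Lⱼ ∩ S)`, which yields a nonzero vector of `Lᵢ ∩ Lⱼ`. Five classes would not
suffice: five points of `S` can extend to pairwise disjoint Lagrangians.
-/

section Lagrangian

variable {K V : Type*} [Field K] [AddCommGroup V] [Module K V]

/-- A subspace that is its own orthogonal complement; for a symplectic form these are the maximal
totally isotropic subspaces. -/
def IsLagrangian (B : LinearMap.BilinForm K V) (W : Submodule K V) : Prop :=
  B.orthogonal W = W

variable {B : LinearMap.BilinForm K V} {S P : Submodule K V}

lemma orthogonal_sup (P Q : Submodule K V) :
    B.orthogonal (P ⊔ Q) = B.orthogonal P ⊓ B.orthogonal Q := by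
  refine le_antisymm (le_inf (LinearMap.BilinForm.orthogonal_le le_sup_left)
    (LinearMap.BilinForm.orthogonal_le le_sup_right)) ?_
  rintro v ⟨hP, hQ⟩ w hw
  obtain ⟨p, hp, q, hq, rfl⟩ := Submodule.mem_sup.mp hw
  rw [LinearMap.map_add, LinearMap.add_apply, hP p hp, hQ q hq, add_zero]

lemma span_le_orthogonal_span {A : Set V} (hA : ∀ v ∈ A, ∀ w ∈ A, B v w = 0) :
    Submodule.span K A ≤ B.orthogonal (Submodule.span K A) := by
  rw [Submodule.span_le]
  intro w hw
  suffices Submodule.span K A ≤ LinearMap.ker (B.flip w) from fun v hv => this hv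
  exact Submodule.span_le.mpr fun v hv => hA v hv w hw

section FiniteDimensional

variable [FiniteDimensional K V]

lemma isLagrangian_of_le_orthogonal (hB : B.Nondegenerate) (hS : S ≤ B.orthogonal S)
    (hdim : Module.finrank K V ≤ 2 * Module.finrank K S) : IsLagrangian B S := by
  refine (Submodule.eq_of_le_of_finrank_le hS ?_).symm
  rw [LinearMap.BilinForm.finrank_orthogonal hB]
  omega

lemma IsLagrangian.two_mul_finrank (hS : IsLagrangian B S) (hB : B.Nondegenerate) :
    2 * Module.finrank K S = Module.finrank K V := by
  have hfin := LinearMap.BilinForm.finrank_orthogonal hB S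
  rw [hS] at hfin
  have := Submodule.finrank_le S
  omega

lemma IsLagrangian.ncard_coe {n : ℕ} (hS : IsLagrangian B S) (hB : B.Nondegenerate)
    (hV : Module.finrank K V = 2 * n) : (S : Set V).ncard = Nat.card K ^ n := by
  have hdim := hS.two_mul_finrank hB
  rw [show n = Module.finrank K S by omega]
  exact Module.natCard_eq_pow_finrank (V := S)

lemma IsLagrangian.exists_mem_orthogonal_notMem {L : Submodule K V} (hL : IsLagrangian B L)
    (hS : IsLagrangian B S) (hB : B.Nondegenerate) (hrefl : B.IsRefl) (hPS : P < S)
    (hLS : L ⊓ S ≤ P) : ∃ v ∈ L, v ∈ B.orthogonal P ∧ v ∉ S := by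
  by_contra! hcon
  have hLP : B.orthogonal (L ⊔ P) ≤ P := by
    rw [orthogonal_sup, hL]
    exact fun v hv => hLS ⟨hv.1, hcon v hv.1 hv.2⟩
  have hS_le : S ≤ P ⊔ L :=
    calc S = B.orthogonal S := hS.symm
      _ ≤ B.orthogonal P := LinearMap.BilinForm.orthogonal_le hPS.le
      _ ≤ B.orthogonal (B.orthogonal (L ⊔ P)) := LinearMap.BilinForm.orthogonal_le hLP
      _ = P ⊔ L := by rw [LinearMap.BilinForm.orthogonal_orthogonal hB hrefl, sup_comm]
  refine hPS.not_ge ?_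
  calc S = (P ⊔ L) ⊓ S := (inf_eq_right.mpr hS_le).symm
    _ = P ⊔ L ⊓ S := sup_inf_assoc_of_le L hPS.le
    _ ≤ P := sup_le le_rfl hLS

end FiniteDimensional

lemma covBy_of_finrank_eq_succ [FiniteDimensional K V] (hPS : P ≤ S)
    (hdim : Module.finrank K S = Module.finrank K P + 1) : P ⋖ S := by
  refine ⟨lt_of_le_of_ne hPS fun h => by rw [h] at hdim; omega, fun Q hPQ hQS => ?_⟩
  have := Submodule.finrank_lt_finrank_of_lt hPQ
  have := Submodule.finrank_lt_finrank_of_lt hQS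
  omega

lemma sup_span_singleton_eq_of_covBy (hPS : P ⋖ S) {d : V} (hdS : d ∈ S) (hdP : d ∉ P) :
    P ⊔ Submodule.span K {d} = S := by
  have hd : Submodule.span K {d} ≤ S := (Submodule.span_singleton_le_iff_mem _ _).mpr hdS
  refine (hPS.eq_or_eq le_sup_left (sup_le hPS.le hd)).resolve_left fun h => hdP ?_
  exact sup_eq_left.mp h (Submodule.mem_span_singleton_self d)

lemma IsLagrangian.mem_of_orthogonal (hS : IsLagrangian B S) {d v : V}
    (hd : P ⊔ Submodule.span K {d} = S) (hv : v ∈ B.orthogonal P) (hdv : B d v = 0) : v ∈ S := by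
  rw [← hS, ← hd, orthogonal_sup]
  refine ⟨hv, fun w hw => ?_⟩
  obtain ⟨c, rfl⟩ := Submodule.mem_span_singleton.mp hw
  simp [hdv]

lemma mem_of_mem_sup_span_singleton_of_apply_eq_zero {f : V →ₗ[K] K} {d v : V}
    (hf : P ≤ LinearMap.ker f) (hd : f d ≠ 0) (hv : v ∈ P ⊔ Submodule.span K {d})
    (hfv : f v = 0) : v ∈ P := by
  obtain ⟨p, hp, w, hw, rfl⟩ := Submodule.mem_sup.mp hv
  obtain ⟨c, rfl⟩ := Submodule.mem_span_singleton.mp hw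
  have hc : c = 0 := by simpa [LinearMap.mem_ker.mp (hf hp), hd] using hfv
  simpa [hc] using hp

lemma mem_of_sub_mem_sup {L M : Submodule K V} (hLM : Disjoint L M) {v w : V} (hv : v ∈ L)
    (hw : w ∈ M) (hvw : v - w ∈ L ⊓ S ⊔ M ⊓ S) : v ∈ S := by
  obtain ⟨x, hx, y, hy, hxy⟩ := Submodule.mem_sup.mp hvw
  have heq : v - x = w + y := by rw [eq_sub_of_add_eq' hxy]; abel
  have hzero : v - x = 0 := Submodule.disjoint_def.mp hLM _ (sub_mem hv hx.1)
    (heq ▸ add_mem hw hy.1)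
  exact sub_eq_zero.mp hzero ▸ hx.2

/-- The points of the line `P^⊥ / P` other than `S / P` are parametrized by `K`, and distinct `L i`
meet that line in distinct points. -/
theorem IsLagrangian.exists_injective_of_inf_sup_inf_eq [FiniteDimensional K V] {ι : Type*}
    (hB : B.Nondegenerate) (hrefl : B.IsRefl) (hS : IsLagrangian B S) (hPS : P ⋖ S)
    {L : ι → Submodule K V} (hL : ∀ i, IsLagrangian B (L i))
    (hdisj : Pairwise fun i j => Disjoint (L i) (L j))
    (hLS : Pairwise fun i j => L i ⊓ S ⊔ L j ⊓ S = P) :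
    ∃ c : ι → K, Function.Injective c := by
  rcases subsingleton_or_nontrivial ι with _ | _
  · exact ⟨0, Function.injective_of_subsingleton _⟩
  have hLP (i : ι) : L i ⊓ S ≤ P := by
    obtain ⟨j, hj⟩ := exists_ne i
    exact hLS hj.symm ▸ le_sup_left
  obtain ⟨d, hdS, hdP⟩ := SetLike.exists_of_lt hPS.lt
  have hd := sup_span_singleton_eq_of_covBy hPS hdS hdP
  have hex (i : ι) : ∃ v ∈ L i, v ∈ B.orthogonal P ∧ B d v = 1 := by
    obtain ⟨v, hvL, hvP, hvS⟩ := (hL i).exists_mem_orthogonal_notMem hS hB hrefl hPS.lt (hLP i)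
    have hdv : B d v ≠ 0 := fun h => hvS (hS.mem_of_orthogonal hd hvP h)
    exact ⟨(B d v)⁻¹ • v, (L i).smul_mem _ hvL, Submodule.smul_mem _ _ hvP, by simp [hdv]⟩
  choose v hvL hvP hdv using hex
  have hvS (i : ι) : v i ∉ S := fun h => by
    rw [← hS] at h
    simpa [hdv] using h d hdS
  obtain ⟨f, hfd, hfP⟩ := Submodule.exists_le_ker_of_notMem hdP
  refine ⟨fun i => f (v i), fun i j hij => by_contra fun hne => hvS i ?_⟩
  have hsubS : v i - v j ∈ S :=
    hS.mem_of_orthogonal hd (sub_mem (hvP i) (hvP j)) (by simp [hdv])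
  have hsubP : v i - v j ∈ P := mem_of_mem_sup_span_singleton_of_apply_eq_zero hfP hfd
    (hd ▸ hsubS) (by rw [map_sub, sub_eq_zero]; exact hij)
  exact mem_of_sub_mem_sup (hdisj hne) (hvL i) (hvL j) (hLS hne ▸ hsubP)

lemma isLagrangian_span_of_card_lt [Finite K] [FiniteDimensional K V] {n : ℕ} {A : Set V}
    (hB : B.Nondegenerate) (hV : Module.finrank K V = 2 * n)
    (hA : ∀ v ∈ A, ∀ w ∈ A, B v w = 0) (hcard : Nat.card K ^ n < Nat.card K * A.ncard) :
    IsLagrangian B (Submodule.span K A) := by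
  have : Finite V := Module.finite_of_finite K
  have hA_le : A.ncard ≤ Nat.card K ^ Module.finrank K (Submodule.span K A) := by
    rw [← Module.natCard_eq_pow_finrank]
    exact Set.ncard_le_ncard Submodule.subset_span
  have hlt : Nat.card K ^ n < Nat.card K ^ (Module.finrank K (Submodule.span K A) + 1) :=
    hcard.trans_le (by rw [pow_succ']; gcongr)
  have hn := (Nat.pow_lt_pow_iff_right Finite.one_lt_card).mp hlt
  exact isLagrangian_of_le_orthogonal hB (span_le_orthogonal_span hA) (by omega)

end Lagrangian

section BinaryField

variable {V : Type*} [AddCommGroup V] [Module (ZMod 2) V]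

lemma add_ne_zero_of_ne {x y : V} (hxy : x ≠ y) : x + y ≠ 0 := by
  rwa [← ZModModule.sub_eq_add, sub_ne_zero]

lemma finrank_span_singleton_sup {x y : V} (hx : x ≠ 0) (hy : y ≠ 0) (hxy : x ≠ y) :
    Module.finrank (ZMod 2)
      (Submodule.span (ZMod 2) {x} ⊔ Submodule.span (ZMod 2) {y} : Submodule (ZMod 2) V) = 2 := by
  have hli : LinearIndependent (ZMod 2) ![x, y] := by
    rw [LinearIndependent.pair_iff' hx]
    intro c
    fin_cases c
    · exact (zero_smul (ZMod 2) x).trans_ne hy.symm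
    · exact (one_smul (ZMod 2) x).trans_ne hxy
  have hspan := finrank_span_eq_card hli
  rwa [Matrix.range_cons_cons_empty, Submodule.span_insert, Fintype.card_fin] at hspan

lemma span_singleton_sup_eq_of_finrank_eq_two [FiniteDimensional (ZMod 2) V]
    {P : Submodule (ZMod 2) V} (hP : Module.finrank (ZMod 2) P = 2) {x y : V} (hxP : x ∈ P)
    (hyP : y ∈ P) (hx : x ≠ 0) (hy : y ≠ 0) (hxy : x ≠ y) :
    Submodule.span (ZMod 2) {x} ⊔ Submodule.span (ZMod 2) {y} = P := by
  refine Submodule.eq_of_le_of_finrank_eq (sup_le ?_ ?_) ?_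
  · rwa [Submodule.span_singleton_le_iff_mem]
  · rwa [Submodule.span_singleton_le_iff_mem]
  · rw [hP, finrank_span_singleton_sup hx hy hxy]

variable {ι : Type*} {s : ι → V} {S : Submodule (ZMod 2) V}

lemma exists_add_eq_of_diff_subsingleton [Fintype ι] (hι : 2 < Fintype.card ι)
    (hs : Function.Injective s) (hsS : ∀ i, s i ∈ S)
    (hrest : ((S : Set V) \ insert 0 (Set.range s)).Subsingleton) :
    ∃ i j k, i ≠ j ∧ s i + s j = s k := by
  obtain ⟨i, j, k, hij, hik, hjk⟩ := Fintype.two_lt_card_iff.mp hι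
  by_contra! hcon
  have hmem {a b : ι} (hab : a ≠ b) : s a + s b ∈ (S : Set V) \ insert 0 (Set.range s) := by
    refine ⟨add_mem (hsS a) (hsS b), ?_⟩
    rintro (h | ⟨c, hc⟩)
    exacts [add_ne_zero_of_ne (hs.ne hab) h, hcon a b c hab hc.symm]
  exact hjk (hs (add_left_cancel (hrest (hmem hij) (hmem hik))))

variable {L : ι → Submodule (ZMod 2) V}

lemma injective_of_pairwise_disjoint (hdisj : Pairwise fun i j => Disjoint (L i) (L j))
    (hsL : ∀ i, s i ∈ L i) (hs0 : ∀ i, s i ≠ 0) : Function.Injective s := by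
  refine fun i j hij => by_contra fun hne => hs0 i ?_
  exact Submodule.disjoint_def.mp (hdisj hne) _ (hsL i) (hij ▸ hsL j)

lemma inf_eq_span_singleton_of_diff_subsingleton
    (hdisj : Pairwise fun i j => Disjoint (L i) (L j)) (hsL : ∀ i, s i ∈ L i)
    (hs0 : ∀ i, s i ≠ 0) (hsS : ∀ i, s i ∈ S)
    (hrest : ((S : Set V) \ insert 0 (Set.range s)).Subsingleton) (i : ι) :
    L i ⊓ S = Submodule.span (ZMod 2) {s i} := by
  refine le_antisymm (fun v hv => ?_)
    ((Submodule.span_singleton_le_iff_mem _ _).mpr ⟨hsL i, hsS i⟩)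
  by_contra hvs
  have hmem {w : V} (hw : w ∈ L i ⊓ S) (hws : w ∉ Submodule.span (ZMod 2) {s i}) :
      w ∈ (S : Set V) \ insert 0 (Set.range s) := by
    refine ⟨hw.2, ?_⟩
    rintro (rfl | ⟨j, rfl⟩)
    · exact hws (zero_mem _)
    · rcases eq_or_ne i j with rfl | hij
      · exact hws (Submodule.mem_span_singleton_self _)
      · exact hs0 j (Submodule.disjoint_def.mp (hdisj hij) _ hw.1 (hsL j))
  have hadd : v + s i ∉ Submodule.span (ZMod 2) {s i} := by
    rwa [Submodule.add_mem_iff_left _ (Submodule.mem_span_singleton_self _)]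
  have hshift := hrest (hmem (add_mem hv ⟨hsL i, hsS i⟩) hadd) (hmem hv hvs)
  exact hs0 i (add_eq_left.mp hshift)

lemma IsLagrangian.add_ne_of_inf_eq_span_singleton [FiniteDimensional (ZMod 2) V]
    {B : LinearMap.BilinForm (ZMod 2) V} (hB : B.Nondegenerate) (hrefl : B.IsRefl)
    (hS : IsLagrangian B S) (hdim : Module.finrank (ZMod 2) S = 3)
    (hL : ∀ i, IsLagrangian B (L i)) (hdisj : Pairwise fun i j => Disjoint (L i) (L j))
    (hs0 : ∀ i, s i ≠ 0) (hLS : ∀ i, L i ⊓ S = Submodule.span (ZMod 2) {s i}) {i j : ι}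
    (hij : i ≠ j) (k : ι) : s i + s j ≠ s k := by
  intro hk
  have hsLS (a : ι) : s a ∈ L a ⊓ S := hLS a ▸ Submodule.mem_span_singleton_self _
  have hinj := injective_of_pairwise_disjoint hdisj (fun a => (hsLS a).1) hs0
  have hik : i ≠ k := by
    rintro rfl
    exact hs0 j (add_eq_left.mp hk)
  have hjk : j ≠ k := by
    rintro rfl
    exact hs0 i (add_eq_right.mp hk)
  let t : Fin 3 → ι := ![i, j, k]
  have ht : Function.Injective t := by
    intro a b hab
    fin_cases a <;> fin_cases b <;> simp_all [t, eq_comm]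
  let P := Submodule.span (ZMod 2) {s i} ⊔ Submodule.span (ZMod 2) {s j}
  have hPdim : Module.finrank (ZMod 2) P = 2 :=
    finrank_span_singleton_sup (hs0 i) (hs0 j) (hinj.ne hij)
  have hiP : s i ∈ P := Submodule.mem_sup_left (Submodule.mem_span_singleton_self _)
  have hjP : s j ∈ P := Submodule.mem_sup_right (Submodule.mem_span_singleton_self _)
  have htP (a : Fin 3) : s (t a) ∈ P := by
    fin_cases a
    exacts [hiP, hjP, hk ▸ add_mem hiP hjP]
  have hPS : P ≤ S := sup_le (hLS i ▸ inf_le_right) (hLS j ▸ inf_le_right)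
  have hspan {a b : Fin 3} (hab : a ≠ b) : L (t a) ⊓ S ⊔ L (t b) ⊓ S = P := by
    rw [hLS, hLS]
    exact span_singleton_sup_eq_of_finrank_eq_two hPdim (htP a) (htP b) (hs0 _) (hs0 _)
      (hinj.ne (ht.ne hab))
  obtain ⟨c, hc⟩ := IsLagrangian.exists_injective_of_inf_sup_inf_eq hB hrefl hS
    (covBy_of_finrank_eq_succ hPS (by omega)) (fun a => hL (t a))
    (fun a b hab => hdisj (ht.ne hab)) (fun a b hab => hspan hab)
  simpa using Fintype.card_le_of_injective c hc

theorem IsLagrangian.not_pairwise_orthogonal_of_six_le_card [FiniteDimensional (ZMod 2) V]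
    [Fintype ι] (hι : 6 ≤ Fintype.card ι) {B : LinearMap.BilinForm (ZMod 2) V}
    (hB : B.Nondegenerate) (hrefl : B.IsRefl) (hV : Module.finrank (ZMod 2) V = 6)
    (hL : ∀ i, IsLagrangian B (L i)) (hdisj : Pairwise fun i j => Disjoint (L i) (L j))
    (hsL : ∀ i, s i ∈ L i) (hs0 : ∀ i, s i ≠ 0) : ¬ ∀ i j, B (s i) (s j) = 0 := by
  intro hs
  have hinj := injective_of_pairwise_disjoint hdisj hsL hs0
  have : Finite V := Module.finite_of_finite (ZMod 2)
  have hncard : (Set.range s).ncard = Fintype.card ι := by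
    rw [Set.ncard_range_of_injective hinj, Nat.card_eq_fintype_card]
  let S := Submodule.span (ZMod 2) (Set.range s)
  have hsS (i : ι) : s i ∈ S := Submodule.subset_span (Set.mem_range_self i)
  have hS : IsLagrangian B S := isLagrangian_span_of_card_lt (n := 3) hB hV
    (by rintro _ ⟨i, rfl⟩ _ ⟨j, rfl⟩; exact hs i j) (by rw [hncard, Nat.card_zmod]; omega)
  have hrest : ((S : Set V) \ insert 0 (Set.range s)).Subsingleton := by
    have hS8 := hS.ncard_coe (n := 3) hB hV
    have hsub : insert 0 (Set.range s) ⊆ (S : Set V) :=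
      Set.insert_subset (zero_mem S) Submodule.subset_span
    have h0 : (0 : V) ∉ Set.range s := fun ⟨i, hi⟩ => hs0 i hi
    rw [← Set.ncard_le_one_iff_subsingleton, Set.ncard_sdiff hsub, hS8,
      Set.ncard_insert_of_notMem h0, hncard, Nat.card_zmod]
    omega
  obtain ⟨i, j, k, hij, hijk⟩ := exists_add_eq_of_diff_subsingleton (by omega) hinj hsS hrest
  have hSdim := hS.two_mul_finrank hB
  exact hS.add_ne_of_inf_eq_span_singleton hB hrefl (by omega) hL hdisj hs0
    (inf_eq_span_singleton_of_diff_subsingleton hdisj hsL hs0 hsS hrest) hij k hijk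

end BinaryField

section Pauli

/-- The character `a ↦ (-1) ^ a` of `ℤ/2`. -/
def signChar : AddChar (ZMod 2) ℂ :=
  AddChar.zmodChar 2 (neg_one_sq (R := ℂ))

lemma signChar_one : signChar 1 = -1 := by
  simp [signChar, AddChar.zmodChar_apply, ZMod.val_one]

lemma eq_zero_or_eq_one_of_zmod_two : ∀ a : ZMod 2, a = 0 ∨ a = 1 := by
  decide

lemma signChar_eq_one_iff {a : ZMod 2} : signChar a = 1 ↔ a = 0 := by
  rcases eq_zero_or_eq_one_of_zmod_two a with rfl | rfl
  · simp
  · norm_num [signChar_one]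

lemma addChar_map_sum {A M ι : Type*} [AddCommMonoid A] [CommMonoid M] (ψ : AddChar A M)
    (s : Finset ι) (f : ι → A) : ψ (∑ i ∈ s, f i) = ∏ i ∈ s, ψ (f i) :=
  map_prod ψ.toMonoidHom (fun i => Multiplicative.ofAdd (f i)) s

/-- The single-qubit Pauli matrix proportional to `X ^ a * Z ^ b`. -/
def qubitPauli (x : ZMod 2 × ZMod 2) : Matrix (Fin 2) (Fin 2) ℂ :=
  if x.1 = 0 then (if x.2 = 0 then pI else pZ) else (if x.2 = 0 then pX else pY)

lemma qubitPauli_mul_comm (x y : ZMod 2 × ZMod 2) :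
    qubitPauli x * qubitPauli y =
      signChar (x.1 * y.2 + x.2 * y.1) • (qubitPauli y * qubitPauli x) := by
  obtain ⟨a, b⟩ := x
  obtain ⟨c, d⟩ := y
  rcases eq_zero_or_eq_one_of_zmod_two a with rfl | rfl <;>
    rcases eq_zero_or_eq_one_of_zmod_two b with rfl | rfl <;>
    rcases eq_zero_or_eq_one_of_zmod_two c with rfl | rfl <;>
    rcases eq_zero_or_eq_one_of_zmod_two d with rfl | rfl <;>
    simp [qubitPauli, signChar_one, pI, pX, pY, pZ, CharTwo.add_self_eq_zero]

lemma qubitPauli_mul_self (x : ZMod 2 × ZMod 2) : qubitPauli x * qubitPauli x = 1 := by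
  obtain ⟨a, b⟩ := x
  rcases eq_zero_or_eq_one_of_zmod_two a with rfl | rfl <;>
    rcases eq_zero_or_eq_one_of_zmod_two b with rfl | rfl <;>
    simp [qubitPauli, pI, pX, pY, pZ, Matrix.one_fin_two]

lemma exists_qubitPauli_eq {M : Matrix (Fin 2) (Fin 2) ℂ}
    (hM : M = pI ∨ M = pX ∨ M = pY ∨ M = pZ) : ∃ x, qubitPauli x = M := by
  rcases hM with rfl | rfl | rfl | rfl
  · exact ⟨(0, 0), by simp [qubitPauli]⟩
  · exact ⟨(1, 0), by simp [qubitPauli]⟩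
  · exact ⟨(1, 1), by simp [qubitPauli]⟩
  · exact ⟨(0, 1), by simp [qubitPauli]⟩

variable {n : ℕ}

lemma kron_mul_kron (W W' : Fin n → Matrix (Fin 2) (Fin 2) ℂ) :
    kron n W * kron n W' = kron n (fun j => W j * W' j) := by
  ext v w
  simp only [kron, Matrix.mul_apply, Finset.prod_univ_sum, Fintype.piFinset_univ,
    Finset.prod_mul_distrib]

lemma kron_smul (c : Fin n → ℂ) (W : Fin n → Matrix (Fin 2) (Fin 2) ℂ) :
    kron n (fun j => c j • W j) = (∏ j, c j) • kron n W := by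
  ext v w
  simp [kron, Finset.prod_mul_distrib]

lemma kron_one : kron n (fun _ => 1) = 1 := by
  ext v w
  simp [kron, Matrix.one_apply, Finset.prod_ite_zero, funext_iff]

/-- Labels of `n`-qubit Pauli operators: at each qubit, the exponents of `X` and of `Z`. -/
abbrev PauliLabel (n : ℕ) := Fin n → ZMod 2 × ZMod 2

/-- The Pauli operator with a given label. -/
def pauliOp (v : PauliLabel n) : QMat n :=
  kron n fun j => qubitPauli (v j)

/-- The symplectic form `∑ j, (a j * d j + b j * c j)` of the labels `(a, b)` and `(c, d)`, which
records whether the corresponding Pauli operators commute. -/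
def pauliForm (n : ℕ) : LinearMap.BilinForm (ZMod 2) (PauliLabel n) :=
  ∑ j, ((LinearMap.mul (ZMod 2) (ZMod 2)).compl₁₂
      (LinearMap.fst _ _ _ ∘ₗ LinearMap.proj j) (LinearMap.snd _ _ _ ∘ₗ LinearMap.proj j) +
    (LinearMap.mul (ZMod 2) (ZMod 2)).compl₁₂
      (LinearMap.snd _ _ _ ∘ₗ LinearMap.proj j) (LinearMap.fst _ _ _ ∘ₗ LinearMap.proj j))

lemma pauliForm_apply (v w : PauliLabel n) :
    pauliForm n v w = ∑ j, ((v j).1 * (w j).2 + (v j).2 * (w j).1) := by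
  simp [pauliForm, LinearMap.sum_apply]

lemma pauliForm_isRefl : (pauliForm n).IsRefl := by
  intro v w h
  rw [pauliForm_apply] at h ⊢
  rw [← h]
  exact Finset.sum_congr rfl fun _ _ => by ring

lemma pauliForm_nondegenerate : (pauliForm n).Nondegenerate := by
  refine pauliForm_isRefl.nondegenerate_iff_separatingLeft.mpr fun v hv => ?_
  have hsingle (j : Fin n) (x : ZMod 2 × ZMod 2) : (v j).1 * x.2 + (v j).2 * x.1 = 0 := by
    have h := hv (Pi.single j x)
    rw [pauliForm_apply, Fintype.sum_eq_single j fun k hk => by simp [Pi.single_eq_of_ne hk]] at h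
    simpa only [Pi.single_eq_same] using h
  funext j
  exact Prod.ext (by simpa using hsingle j (0, 1)) (by simpa using hsingle j (1, 0))

lemma finrank_pauliLabel : Module.finrank (ZMod 2) (PauliLabel n) = 2 * n := by
  simp [Module.finrank_pi_fintype, mul_comm]

lemma pauliOp_zero : pauliOp (0 : PauliLabel n) = 1 := by
  rw [← kron_one, pauliOp]
  simp [qubitPauli, pI]

lemma pauliOp_mul_self (v : PauliLabel n) : pauliOp v * pauliOp v = 1 := by
  rw [pauliOp, kron_mul_kron]
  simp only [qubitPauli_mul_self, kron_one]

lemma pauliOp_mul_comm (v w : PauliLabel n) :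
    pauliOp v * pauliOp w = signChar (pauliForm n v w) • (pauliOp w * pauliOp v) := by
  rw [pauliOp, pauliOp, kron_mul_kron, kron_mul_kron, pauliForm_apply, addChar_map_sum,
    ← kron_smul]
  simp only [← qubitPauli_mul_comm]

lemma pauliOp_commute_iff {v w : PauliLabel n} :
    pauliOp v * pauliOp w = pauliOp w * pauliOp v ↔ pauliForm n v w = 0 := by
  have hunit (u : PauliLabel n) : IsUnit (pauliOp u) :=
    .of_mul_eq_one _ (pauliOp_mul_self u)
  have hne : pauliOp w * pauliOp v ≠ 0 := ((hunit w).mul (hunit v)).ne_zero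
  rw [pauliOp_mul_comm, ← signChar_eq_one_iff]
  conv_lhs => rhs; rw [← one_smul ℂ (pauliOp w * pauliOp v)]
  exact (smul_left_injective ℂ hne).eq_iff

lemma pauliOp_injective : Function.Injective (pauliOp (n := n)) := by
  intro v w hvw
  have hform (u : PauliLabel n) : pauliForm n v u = 0 ↔ pauliForm n w u = 0 := by
    rw [← pauliOp_commute_iff, ← pauliOp_commute_iff, hvw]
  have hzero : ∀ a b : ZMod 2, (a = 0 ↔ b = 0) → a - b = 0 := by decide
  refine sub_eq_zero.mp (pauliForm_nondegenerate.1 _ fun u => ?_)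
  rw [map_sub, LinearMap.sub_apply]
  exact hzero _ _ (hform u)

lemma IsPauliOp.exists_pauliOp_eq {M : QMat n} (hM : IsPauliOp n M) : ∃ v, pauliOp v = M := by
  obtain ⟨W, hW, rfl⟩ := hM
  choose v hv using fun j => exists_qubitPauli_eq (hW j)
  exact ⟨v, by simp only [pauliOp, hv]⟩

/-- The span of the labels of the Pauli operators in `C`. -/
def labelSpan (C : Set (QMat n)) : Submodule (ZMod 2) (PauliLabel n) :=
  Submodule.span (ZMod 2) (pauliOp ⁻¹' C)

variable {C D : Set (QMat n)}

lemma IsMaxClass.ncard_insert_zero_preimage (hC : IsMaxClass n C) :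
    (insert 0 (pauliOp ⁻¹' C)).ncard = 2 ^ n := by
  obtain ⟨_, hcard, hpauli, _⟩ := hC
  have h0 : (0 : PauliLabel n) ∉ pauliOp ⁻¹' C := fun h => (hpauli _ h).2 pauliOp_zero
  rw [Set.ncard_insert_of_notMem h0, Set.ncard_preimage_of_injective_subset_range
    pauliOp_injective fun M hM => (hpauli M hM).1.exists_pauliOp_eq, hcard]
  exact Nat.sub_add_cancel Nat.one_le_two_pow

lemma IsMaxClass.isLagrangian_labelSpan (hC : IsMaxClass n C) :
    IsLagrangian (pauliForm n) (labelSpan C) := by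
  have hcomm : ∀ v ∈ pauliOp ⁻¹' C, ∀ w ∈ pauliOp ⁻¹' C, pauliForm n v w = 0 :=
    fun v hv w hw => pauliOp_commute_iff.mp (hC.2.2.2.1 _ hv _ hw)
  rw [labelSpan, ← Submodule.span_insert_zero]
  refine isLagrangian_span_of_card_lt pauliForm_nondegenerate finrank_pauliLabel ?_ ?_
  · rintro v (rfl | hv) w (rfl | hw)
    exacts [map_zero _, by simp, map_zero _, hcomm v hv w hw]
  · rw [hC.ncard_insert_zero_preimage, Nat.card_zmod]
    exact lt_mul_of_one_lt_left (by positivity) one_lt_two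

lemma IsMaxClass.mem_labelSpan_iff (hC : IsMaxClass n C) {v : PauliLabel n} :
    v ∈ labelSpan C ↔ v = 0 ∨ pauliOp v ∈ C := by
  have hsub : insert 0 (pauliOp ⁻¹' C) ⊆ (labelSpan C : Set (PauliLabel n)) :=
    Set.insert_subset (zero_mem _) Submodule.subset_span
  have hncard := hC.isLagrangian_labelSpan.ncard_coe pauliForm_nondegenerate finrank_pauliLabel
  rw [Nat.card_zmod, ← hC.ncard_insert_zero_preimage] at hncard
  rw [← SetLike.mem_coe, ← Set.eq_of_subset_of_ncard_le hsub hncard.le]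
  rfl

lemma ClassDisjoint.disjoint_labelSpan (hCD : ClassDisjoint C D) (hC : IsMaxClass n C)
    (hD : IsMaxClass n D) : Disjoint (labelSpan C) (labelSpan D) := by
  refine Submodule.disjoint_def.mpr fun v hvC hvD => by_contra fun hv => ?_
  exact hCD _ ((hC.mem_labelSpan_iff.mp hvC).resolve_left hv) _
    ((hD.mem_labelSpan_iff.mp hvD).resolve_left hv) ⟨1, one_ne_zero, (one_smul ℂ _).symm⟩

end Pauli

theorem no_transversal_commuting_seven_d8_general {ι : Type*} [Fintype ι]
    (hι : 6 ≤ Fintype.card ι) (C : ι → Set (QMat 3)) (hmax : ∀ i, IsMaxClass 3 (C i))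
    (hdisj : ∀ i j, i ≠ j → ClassDisjoint (C i) (C j)) :
    ¬ ∃ σ : ι → QMat 3, (∀ i, σ i ∈ C i) ∧ ∀ i j, σ i * σ j = σ j * σ i := by
  rintro ⟨σ, hσ, hcomm⟩
  have hpauli (i : ι) := (hmax i).2.2.1 (σ i) (hσ i)
  choose s hs using fun i => (hpauli i).1.exists_pauliOp_eq
  have hs0 (i : ι) : s i ≠ 0 := fun h => (hpauli i).2 (by rw [← hs, h, pauliOp_zero])
  refine IsLagrangian.not_pairwise_orthogonal_of_six_le_card hι pauliForm_nondegenerate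
    pauliForm_isRefl finrank_pauliLabel (fun i => (hmax i).isLagrangian_labelSpan)
    (fun i j hij => (hdisj i j hij).disjoint_labelSpan (hmax i) (hmax j))
    (fun i => (hmax i).mem_labelSpan_iff.mpr (.inr (hs i ▸ hσ i))) hs0 fun i j => ?_
  exact pauliOp_commute_iff.mp (by simpa only [hs] using hcomm i j)

/-- Given seven pairwise disjoint maximal commuting Pauli classes in `d = 8`,
one cannot choose one operator from each class such that the seven chosen operators
pairwise commute. -/
theorem no_transversal_commuting_seven_d8 (C : Fin 7 → Set (QMat 3))
    (hmax : ∀ i, IsMaxClass 3 (C i))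
    (hdisj : ∀ i j, i ≠ j → ClassDisjoint (C i) (C j)) :
    ¬ ∃ σ : Fin 7 → QMat 3, (∀ i, σ i ∈ C i) ∧
        ∀ i j, σ i * σ j = σ j * σ i := by
  exact no_transversal_commuting_seven_d8_general (by simp) C hmax hdisj
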